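/- (Lemma 4.2(1), pointwise form.) Let φ ∈ Δ be a unit spinor. Then the trilinear form Φ_φ on ℝ^7 is alternating, and the cross product it defines satisfies (x×y)·φ = −x·y·φ − ⟨x,y⟩·φ for all x, y ∈ ℝ^7. -/

import Mathlib

open RealInnerProductSpace

noncomputable section

/-- The spin representation space Δ = ℝ^8. -/
abbrev Δ : Type := EuclideanSpace ℝ (Fin 8)

/-- The standard skew endomorphism E_{ij} of ℝ^8: u_i ↦ u_j, u_j ↦ -u_i, others ↦ 0. -/
def E (i j : Fin 8) : Δ →ₗ[ℝ] Δ where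
  toFun v := v i • EuclideanSpace.single j (1 : ℝ) - v j • EuclideanSpace.single i (1 : ℝ)
  map_add' x y := by
    simp only [PiLp.add_apply, add_smul]
    module
  map_smul' c x := by
    simp only [PiLp.smul_apply, smul_eq_mul, RingHom.id_apply, mul_smul]
    module

/-- The seven Clifford endomorphisms e_1, …, e_7 (indexed 0,…,6). -/
def cliff : Fin 7 → (Δ →ₗ[ℝ] Δ) :=
  ![  E 0 7 + E 1 6 - E 2 5 - E 3 4,
    - E 0 6 + E 1 7 + E 2 4 - E 3 5,
    - E 0 5 + E 1 4 - E 2 7 + E 3 6,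
    - E 0 4 - E 1 5 - E 2 6 - E 3 7,
    - E 0 2 - E 1 3 + E 4 6 + E 5 7,
      E 0 3 - E 1 2 - E 4 7 + E 5 6,
      E 0 1 - E 2 3 - E 4 5 + E 6 7]

/-- j = e_1 ∘ e_2 ∘ e_3 ∘ e_4 ∘ e_5 ∘ e_6. -/
def jmap : Δ →ₗ[ℝ] Δ :=
  cliff 0 ∘ₗ cliff 1 ∘ₗ cliff 2 ∘ₗ cliff 3 ∘ₗ cliff 4 ∘ₗ cliff 5

/-- Clifford multiplication of a vector x ∈ ℝ^6 on a spinor. -/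
def cm6 (x : EuclideanSpace ℝ (Fin 6)) (φ : Δ) : Δ :=
  ∑ i : Fin 6, x i • cliff i.castSucc φ

/-- Clifford multiplication of a vector x ∈ ℝ^7 on a spinor. -/
def cm7 (x : EuclideanSpace ℝ (Fin 7)) (φ : Δ) : Δ :=
  ∑ i : Fin 7, x i • cliff i φ


/-- Standard basis vector of ℝ^7. -/
def v7 (i : Fin 7) : EuclideanSpace ℝ (Fin 7) := EuclideanSpace.single i (1 : ℝ)

/-- The G₂ 3-form Φ_φ(x,y,z) = ⟨x·y·z·φ, φ⟩ on ℝ^7. -/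
def PhiP (φ : Δ) (x y z : EuclideanSpace ℝ (Fin 7)) : ℝ :=
  ⟪cm7 x (cm7 y (cm7 z φ)), φ⟫

/-- Action of a trilinear form on ℝ^7 on a spinor:
τ·χ := Σ_{i<j<k} τ(v_i,v_j,v_k) e_i(e_j(e_k(χ))). -/
def tact7 (τ : EuclideanSpace ℝ (Fin 7) → EuclideanSpace ℝ (Fin 7) →
    EuclideanSpace ℝ (Fin 7) → ℝ) (χ : Δ) : Δ :=
  ∑ i : Fin 7, ∑ j : Fin 7, ∑ k : Fin 7,
    if i < j ∧ j < k then
      τ (v7 i) (v7 j) (v7 k) • cliff i (cliff j (cliff k χ))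
    else 0

/-- Action of a bilinear form on ℝ^7 on a spinor:
σ·χ := Σ_{i<j} σ(v_i,v_j) e_i(e_j(χ)). -/
def bact7 (σ : EuclideanSpace ℝ (Fin 7) → EuclideanSpace ℝ (Fin 7) → ℝ) (χ : Δ) : Δ :=
  ∑ i : Fin 7, ∑ j : Fin 7,
    if i < j then σ (v7 i) (v7 j) • cliff i (cliff j χ) else 0

abbrev R7 : Type := EuclideanSpace ℝ (Fin 7)

lemma cm7_coord (x : R7) (v : Δ) : cm7 x v = !₂[-x 0 * v 7 + x 1 * v 6 + x 2 * v 5 + x 3 * v 4 + x 4 * v 2 - x 5 * v 3 - x 6 * v 1,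
    -x 0 * v 6 - x 1 * v 7 - x 2 * v 4 + x 3 * v 5 + x 4 * v 3 + x 5 * v 2 + x 6 * v 0,
    x 0 * v 5 - x 1 * v 4 + x 2 * v 7 + x 3 * v 6 - x 4 * v 0 - x 5 * v 1 + x 6 * v 3,
    x 0 * v 4 + x 1 * v 5 - x 2 * v 6 + x 3 * v 7 - x 4 * v 1 + x 5 * v 0 - x 6 * v 2,
    -x 0 * v 3 + x 1 * v 2 + x 2 * v 1 - x 3 * v 0 - x 4 * v 6 + x 5 * v 7 + x 6 * v 5,
    -x 0 * v 2 - x 1 * v 3 - x 2 * v 0 - x 3 * v 1 - x 4 * v 7 - x 5 * v 6 - x 6 * v 4,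
    x 0 * v 1 - x 1 * v 0 + x 2 * v 3 - x 3 * v 2 + x 4 * v 4 + x 5 * v 5 - x 6 * v 7,
    x 0 * v 0 + x 1 * v 1 - x 2 * v 2 - x 3 * v 3 + x 4 * v 5 - x 5 * v 4 + x 6 * v 6] := by
  ext i
  fin_cases i <;> simp [cm7, cliff, Fin.sum_univ_succ, E, Fin.succ, Pi.single_apply] <;> ring

lemma inner8 (v w : Δ) : ⟪v, w⟫ = v 0 * w 0 + v 1 * w 1 + v 2 * w 2 + v 3 * w 3 + v 4 * w 4
    + v 5 * w 5 + v 6 * w 6 + v 7 * w 7 := by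
  simp [PiLp.inner_apply, Fin.sum_univ_eight]; ring

lemma inner7 (v w : R7) : ⟪v, w⟫ = v 0 * w 0 + v 1 * w 1 + v 2 * w 2 + v 3 * w 3 + v 4 * w 4
    + v 5 * w 5 + v 6 * w 6 := by
  simp [PiLp.inner_apply, Fin.sum_univ_seven]; ring

lemma cm7_skew (x : R7) (v w : Δ) : ⟪cm7 x v, w⟫ = -⟪v, cm7 x w⟫ := by
  rw [inner8, inner8, cm7_coord, cm7_coord]
  simp
  ring

lemma cm7_cliff (x y : R7) (v : Δ) :
    cm7 x (cm7 y v) = -cm7 y (cm7 x v) - (2 * ⟪x, y⟫) • v := by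
  rw [inner7, cm7_coord x, cm7_coord y, cm7_coord y, cm7_coord x]
  ext i
  fin_cases i <;> simp <;> ring

lemma cm7_smul (x : R7) (c : ℝ) (v : Δ) : cm7 x (c • v) = c • cm7 x v := by
  simp only [cm7, map_smul, Finset.smul_sum]
  exact Finset.sum_congr rfl fun i _ => smul_comm _ _ _

lemma cm7_sq (x : R7) (v : Δ) : cm7 x (cm7 x v) = -(⟪x, x⟫ • v) := by
  have h := cm7_cliff x x v
  have h2 : (2 : ℝ) • cm7 x (cm7 x v) = (2 : ℝ) • (-(⟪x, x⟫ • v)) := by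
    rw [two_smul]
    nth_rewrite 1 [h]
    module
  exact smul_right_injective _ (two_ne_zero) h2

lemma cm7_self (x : R7) (v : Δ) : ⟪cm7 x v, v⟫ = 0 := by
  have h := cm7_skew x v v
  rw [real_inner_comm v] at h
  rw [real_inner_comm]
  linarith

lemma cm7_inner (x z : R7) (v : Δ) : ⟪cm7 x v, cm7 z v⟫ = ⟪x, z⟫ * ⟪v, v⟫ := by
  have h1 := cm7_skew x v (cm7 z v)
  have h2 := cm7_skew z v (cm7 x v)
  rw [cm7_cliff x z, inner_sub_right, inner_neg_right, inner_smul_right] at h1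
  rw [real_inner_comm] at h2
  linarith

/-- A spinor and its Clifford multiples span. -/
lemma expand (v w : Δ) : ⟪v, v⟫ • w = ⟪w, v⟫ • v + ∑ i : Fin 7, ⟪w, cm7 (v7 i) v⟫ • cm7 (v7 i) v := by
  simp only [inner8, cm7_coord, Fin.sum_univ_seven, v7]
  ext i
  fin_cases i <;> simp [Pi.single_apply] <;> ring

lemma cm7_self' (x y : R7) (v : Δ) : ⟪cm7 x v, cm7 y (cm7 x v)⟫ = 0 := by
  rw [real_inner_comm, cm7_self]

/-- Lemma 4.2(1), pointwise form: the 3-form Φ_φ is alternating, and the cross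
product it defines (⟨x×y, z⟩ = Φ_φ(x,y,z)) satisfies
(x×y)·φ = -x·y·φ - ⟨x,y⟩·φ. -/
theorem cross_product_clifford (φ : Δ) (hφ : ⟪φ, φ⟫ = 1)
    (cross : EuclideanSpace ℝ (Fin 7) → EuclideanSpace ℝ (Fin 7) →
      EuclideanSpace ℝ (Fin 7))
    (hcross : ∀ x y z : EuclideanSpace ℝ (Fin 7), ⟪cross x y, z⟫ = PhiP φ x y z) :
    (∀ x y z : EuclideanSpace ℝ (Fin 7),
      PhiP φ x x z = 0 ∧ PhiP φ x y y = 0 ∧ PhiP φ x y x = 0) ∧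
    (∀ x y : EuclideanSpace ℝ (Fin 7),
      cm7 (cross x y) φ = -cm7 x (cm7 y φ) - ⟪x, y⟫ • φ) := by
  refine ⟨fun x y z => ⟨?_, ?_, ?_⟩, fun x y => ?_⟩
  · rw [PhiP, cm7_sq, inner_neg_left, inner_smul_left, cm7_self]
    simp
  · rw [PhiP, cm7_sq, ← neg_smul, cm7_smul, inner_smul_left, cm7_self]
    simp
  · rw [PhiP, cm7_skew, cm7_skew, neg_neg, cm7_self']
  · set w : Δ := cm7 (cross x y) φ + cm7 x (cm7 y φ) + ⟪x, y⟫ • φ with hw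
    have h1 : ⟪w, φ⟫ = 0 := by
      rw [hw, inner_add_left, inner_add_left, cm7_self, cm7_skew, real_inner_comm,
        cm7_inner, inner_smul_left]
      simp
    have h2 : ∀ z, ⟪w, cm7 z φ⟫ = 0 := by
      intro z
      have h3 := hcross x y z
      rw [PhiP, cm7_skew, cm7_skew, neg_neg, cm7_cliff y x, inner_sub_right, inner_neg_right,
        inner_smul_right, cm7_self, real_inner_comm] at h3
      rw [hw, inner_add_left, inner_add_left, cm7_inner, hφ, inner_smul_left,
        real_inner_comm _ φ, cm7_self, real_inner_comm, h3, real_inner_comm]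
      simp
    have h4 := expand φ w
    simp only [hφ, h1, h2, one_smul, zero_smul, Finset.sum_const_zero, add_zero] at h4
    rw [hw] at h4
    rw [← sub_eq_zero, ← h4]
    module

end
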